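/- Let λ ∈ ℝ and let F : ℝ² → ℝ be defined by F(x) = x₂ · ( arctan|x| / |x|³ − 1/(|x|²(|x|² + 1)) ) for x ≠ 0 and F(0) = 0. If the function λ·F is harmonic on ℝ², i.e. Δ(λF)(x) = 0 for every x ∈ ℝ², then λ = 0. -/

import Mathlib

noncomputable section

def gA (r : ℝ) : ℝ := Real.arctan r / r ^ 3 - 1 / (r ^ 2 * (r ^ 2 + 1))

def gB (r : ℝ) : ℝ := (-3 * Real.arctan r / r ^ 4 + 1 / (r ^ 3 * (1 + r ^ 2))
  + (4 * r ^ 3 + 2 * r) / (r ^ 4 + r ^ 2) ^ 2) / (2 * r)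

theorem gA_deriv (r : ℝ) (hr : 0 < r) : HasDerivAt gA (gB r * (2 * r)) r := by
  have h1 := (Real.hasDerivAt_arctan r).div (hasDerivAt_pow 3 r) (by positivity)
  have h2 := (hasDerivAt_const r (1 : ℝ)).div
    ((hasDerivAt_pow 2 r).mul ((hasDerivAt_pow 2 r).add_const (1 : ℝ)))
    (by simp only [Pi.mul_apply]; positivity)
  have h := h1.sub h2
  refine HasDerivAt.congr_deriv (f := gA) h ?_
  unfold gB
  simp only [Pi.mul_apply]
  field_simp
  push_cast
  ring

theorem gB_deriv : HasDerivAt gB ((15 * Real.pi / 4 - 11) / 2) 1 := by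
  have a1 := ((Real.hasDerivAt_arctan 1).const_mul (-3)).div (hasDerivAt_pow 4 (1 : ℝ)) (by simp)
  have a2 := (hasDerivAt_const (1 : ℝ) (1 : ℝ)).div
    ((hasDerivAt_pow 3 (1 : ℝ)).mul ((hasDerivAt_pow 2 (1 : ℝ)).const_add (1 : ℝ)))
    (by simp; try norm_num)
  have a3 := (((hasDerivAt_pow 3 (1 : ℝ)).const_mul 4).add ((hasDerivAt_id (1 : ℝ)).const_mul 2)).div
    (((hasDerivAt_pow 4 (1 : ℝ)).add (hasDerivAt_pow 2 (1 : ℝ))).pow 2) (by simp; try norm_num)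
  have h := ((a1.add a2).add a3).div ((hasDerivAt_id (1 : ℝ)).const_mul 2) (by simp)
  refine HasDerivAt.congr_deriv (f := gB) h ?_
  simp [Real.arctan_one]
  ring

def hA (s : ℝ) : ℝ := gA (Real.sqrt s)
def hB (s : ℝ) : ℝ := gB (Real.sqrt s)

theorem hA_deriv (s : ℝ) (hs : 0 < s) : HasDerivAt hA (hB s) s := by
  have hr := Real.sqrt_pos.2 hs
  have h := (gA_deriv _ hr).comp s (Real.hasDerivAt_sqrt hs.ne')
  refine HasDerivAt.congr_deriv (f := hA) h ?_
  unfold hB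
  field_simp

theorem hB_deriv : HasDerivAt hB ((15 * Real.pi / 4 - 11) / 4) 1 := by
  have h0 : HasDerivAt gB ((15 * Real.pi / 4 - 11) / 2) (Real.sqrt 1) := by
    rw [Real.sqrt_one]; exact gB_deriv
  have h := h0.comp 1 (Real.hasDerivAt_sqrt one_ne_zero)
  refine HasDerivAt.congr_deriv (f := hB) h ?_
  rw [Real.sqrt_one]; ring

theorem hB_one : hB 1 = 1 - 3 * Real.pi / 8 := by
  unfold hB gB; rw [Real.sqrt_one, Real.arctan_one]; ring

abbrev PL := EuclideanSpace ℝ (Fin 2)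

theorem nsq (y : PL) : ‖y‖ ^ 2 = y 0 ^ 2 + y 1 ^ 2 := by
  rw [EuclideanSpace.norm_sq_eq]; simp

def co (i : Fin 2) : PL →L[ℝ] ℝ := EuclideanSpace.proj i

theorem co_deriv (i : Fin 2) (y : PL) : HasFDerivAt (fun z : PL => z i) (co i) y :=
  (co i).hasFDerivAt

theorem sq_deriv (y : PL) : HasFDerivAt (fun z : PL => z 0 ^ 2 + z 1 ^ 2)
    ((2 * y 0) • co 0 + (2 * y 1) • co 1) y := by
  have := ((co_deriv 0 y).pow 2).add ((co_deriv 1 y).pow 2)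
  refine HasFDerivAt.congr_fderiv (f := fun z : PL => z 0 ^ 2 + z 1 ^ 2) this ?_
  ext v
  simp

theorem s_pos {y : PL} (hy : y ≠ 0) : 0 < y 0 ^ 2 + y 1 ^ 2 := by
  rw [← nsq]; have := norm_pos_iff.2 hy; positivity

theorem harmonic_F_implies_zero (lam : ℝ)
    (F : EuclideanSpace ℝ (Fin 2) → ℝ)
    (hF0 : F 0 = 0)
    (hF : ∀ x : EuclideanSpace ℝ (Fin 2), x ≠ 0 →
      F x = x 1 * (Real.arctan ‖x‖ / ‖x‖ ^ 3 - 1 / (‖x‖ ^ 2 * (‖x‖ ^ 2 + 1))))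
    (hharm : ∀ x : EuclideanSpace ℝ (Fin 2),
      (∑ i : Fin 2, fderiv ℝ (fun y : EuclideanSpace ℝ (Fin 2) =>
          fderiv ℝ (fun z => lam * F z) y (EuclideanSpace.single i 1))
        x (EuclideanSpace.single i 1)) = 0) :
    lam = 0 := by
  have hne : ∀ y : PL, y ≠ 0 → ∀ᶠ z in nhds y, z ≠ 0 := fun y hy => eventually_ne_nhds hy
  have hFd : ∀ y : PL, y ≠ 0 → HasFDerivAt (fun z => lam * F z)
      (lam • (y 1 • (hB (y 0 ^ 2 + y 1 ^ 2) • ((2 * y 0) • co 0 + (2 * y 1) • co 1))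
        + hA (y 0 ^ 2 + y 1 ^ 2) • co 1)) y := by
    intro y hy
    have h1 := (hA_deriv _ (s_pos hy)).comp_hasFDerivAt y (sq_deriv y)
    have h2 := ((co_deriv 1 y).mul h1).const_mul lam
    refine h2.congr_of_eventuallyEq ?_
    filter_upwards [hne y hy] with z hz
    rw [hF z hz]
    simp [hA, gA, ← nsq]
  have key0 : ∀ y : PL, y ≠ 0 → fderiv ℝ (fun z => lam * F z) y (EuclideanSpace.single 0 1)
      = lam * (y 1 * (hB (y 0 ^ 2 + y 1 ^ 2) * (2 * y 0))) := by
    intro y hy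
    rw [(hFd y hy).fderiv]
    simp [co]
  have key1 : ∀ y : PL, y ≠ 0 → fderiv ℝ (fun z => lam * F z) y (EuclideanSpace.single 1 1)
      = lam * (y 1 * (hB (y 0 ^ 2 + y 1 ^ 2) * (2 * y 1)) + hA (y 0 ^ 2 + y 1 ^ 2)) := by
    intro y hy
    rw [(hFd y hy).fderiv]
    simp [co]
    ring
  let e : PL := EuclideanSpace.single 1 1
  have e0 : e 0 = 0 := by simp [e]
  have e1 : e 1 = 1 := by simp [e]
  have he : e ≠ 0 := by intro h; rw [h] at e1; simp at e1
  have hs : e 0 ^ 2 + e 1 ^ 2 = 1 := by rw [e0, e1]; norm_num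
  have dB : HasFDerivAt (fun z : PL => hB (z 0 ^ 2 + z 1 ^ 2))
      (((15 * Real.pi / 4 - 11) / 4) • ((2 * e 0) • co 0 + (2 * e 1) • co 1)) e := by
    have h0 : HasDerivAt hB ((15 * Real.pi / 4 - 11) / 4) (e 0 ^ 2 + e 1 ^ 2) := by
      rw [hs]; exact hB_deriv
    have h1 := h0.comp_hasFDerivAt e (sq_deriv e)
    exact h1
  have dA : HasFDerivAt (fun z : PL => hA (z 0 ^ 2 + z 1 ^ 2))
      (hB (e 0 ^ 2 + e 1 ^ 2) • ((2 * e 0) • co 0 + (2 * e 1) • co 1)) e := by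
    have h1 := (hA_deriv _ (s_pos he)).comp_hasFDerivAt e (sq_deriv e)
    exact h1
  have k0 := (((co_deriv 1 e).mul (dB.mul ((co_deriv 0 e).const_mul 2))).const_mul
    lam).congr_of_eventuallyEq (f₁ := fun y : PL =>
      fderiv ℝ (fun z => lam * F z) y (EuclideanSpace.single 0 1)) (by
        filter_upwards [hne e he] with z hz
        exact key0 z hz)
  have k1 := ((((co_deriv 1 e).mul (dB.mul ((co_deriv 1 e).const_mul 2))).add dA).const_mul
    lam).congr_of_eventuallyEq (f₁ := fun y : PL =>
      fderiv ℝ (fun z => lam * F z) y (EuclideanSpace.single 1 1)) (by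
        filter_upwards [hne e he] with z hz
        exact key1 z hz)
  have H := hharm e
  rw [Fin.sum_univ_two, k0.fderiv, k1.fderiv] at H
  simp [co, e0, e1, hB_one] at H
  have H2 : lam * (3 * Real.pi / 4 - 3) = 0 := by linarith
  rcases mul_eq_zero.1 H2 with h | h
  · exact h
  · have := Real.pi_lt_d2
    exfalso; linarith
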